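/- In the tower construction, set D := ⋃_{n≥1} Dₙ and 𝓜 := ⋃_{n≥2} 𝓜ₙ. Then D_𝓜 = A = k + M, and 𝓜 is a height-one maximal ideal of D. -/

import Mathlib

/- Preamble: the tower construction of Fontana–Kabbaj (Example 3.1).
All rings are realized as subsets/subrings of one ambient field `Amb k0 r`:
the rational function field over `k0` in the indeterminates
`X₁, X₂, …` (indexed by `ℕ`), `Y`, and `Z₁, …, Z_{r-1}`. -/

noncomputable section

open Polynomial

/-- Index type for the indeterminates: `Sum.inl n` is `Xₙ`, `Sum.inr (Sum.inl ())` is `Y`,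
and `Sum.inr (Sum.inr i)` is `Z_{i+1}`. -/
abbrev TowerVars (r : ℕ) : Type := ℕ ⊕ (Unit ⊕ Fin (r - 1))

/-- The ambient field: the fraction field of the polynomial ring over `k0` in all the
indeterminates. -/
abbrev Amb (k0 : Type) [Field k0] (r : ℕ) : Type :=
  FractionRing (MvPolynomial (TowerVars r) k0)

variable (k0 : Type) [Field k0] (r : ℕ)

/-- The indeterminate `Xₙ` as an element of the ambient field. -/
def ambX (n : ℕ) : Amb k0 r :=
  algebraMap (MvPolynomial (TowerVars r) k0) (Amb k0 r) (MvPolynomial.X (Sum.inl n))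

/-- The indeterminate `Y` as an element of the ambient field. -/
def ambY : Amb k0 r :=
  algebraMap (MvPolynomial (TowerVars r) k0) (Amb k0 r) (MvPolynomial.X (Sum.inr (Sum.inl ())))

/-- The indeterminates `Z₁, …, Z_{r-1}` as elements of the ambient field. -/
def ambZ (i : Fin (r - 1)) : Amb k0 r :=
  algebraMap (MvPolynomial (TowerVars r) k0) (Amb k0 r) (MvPolynomial.X (Sum.inr (Sum.inr i)))

/-- The image of the base field `k0` in the ambient field. -/
def baseSet : Set (Amb k0 r) :=
  Set.range fun c : k0 => algebraMap (MvPolynomial (TowerVars r) k0) (Amb k0 r) (MvPolynomial.C c)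

/-- `kₙ := k0(X₁, …, Xₙ)` as a subfield of the ambient field. -/
def kfld (n : ℕ) : Subfield (Amb k0 r) :=
  Subfield.closure (baseSet k0 r ∪ {x | ∃ i, 1 ≤ i ∧ i ≤ n ∧ x = ambX k0 r i})

/-- `Fₙ := kₙ(Z₁, …, Z_{r-1})`. -/
def Ffld (n : ℕ) : Subfield (Amb k0 r) :=
  Subfield.closure (↑(kfld k0 r n) ∪ Set.range (ambZ k0 r))

/-- `Kₙ := Fₙ(Y)`. -/
def Kfld (n : ℕ) : Subfield (Amb k0 r) :=
  Subfield.closure (↑(Ffld k0 r n) ∪ {ambY k0 r})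

/-- The polynomial ring `Fₙ[Y]` as a subring of the ambient field. -/
def polyRing (n : ℕ) : Subring (Amb k0 r) :=
  Subring.closure (↑(Ffld k0 r n) ∪ {ambY k0 r})

/-- `Vₙ := Fₙ[Y]_{(Y)}`, the localization of `Fₙ[Y]` at the prime `(Y)`, as a subset of
the ambient field. -/
def Vset (n : ℕ) : Set (Amb k0 r) :=
  {x | ∃ f ∈ polyRing k0 r n, ∃ g ∈ polyRing k0 r n,
    (¬ ∃ h ∈ polyRing k0 r n, g = ambY k0 r * h) ∧ x = f / g}

/-- `Mₙ := Y·Fₙ[Y]_{(Y)}`, the maximal ideal of `Vₙ`. -/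
def Mset (n : ℕ) : Set (Amb k0 r) :=
  {x | ∃ v ∈ Vset k0 r n, x = ambY k0 r * v}

/-- `Aₙ := kₙ + Mₙ`. -/
def Aset (n : ℕ) : Set (Amb k0 r) :=
  {x | ∃ c ∈ kfld k0 r n, ∃ m ∈ Mset k0 r n, x = c + m}

/-- `k := ⋃ₙ kₙ` as a subset of the ambient field. -/
def kfldU : Set (Amb k0 r) := ⋃ n, (kfld k0 r n : Set (Amb k0 r))

/-- `F := k(Z₁, …, Z_{r-1}) = ⋃ₙ Fₙ`. -/
def FfldU : Subfield (Amb k0 r) :=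
  Subfield.closure (kfldU k0 r ∪ Set.range (ambZ k0 r))

/-- `K := F(Y) = ⋃ₙ Kₙ`. -/
def KfldU : Subfield (Amb k0 r) :=
  Subfield.closure (↑(FfldU k0 r) ∪ {ambY k0 r})

/-- The polynomial ring `F[Y]`. -/
def polyRingU : Subring (Amb k0 r) :=
  Subring.closure (↑(FfldU k0 r) ∪ {ambY k0 r})

/-- `V := F[Y]_{(Y)}`. -/
def VsetU : Set (Amb k0 r) :=
  {x | ∃ f ∈ polyRingU k0 r, ∃ g ∈ polyRingU k0 r,
    (¬ ∃ h ∈ polyRingU k0 r, g = ambY k0 r * h) ∧ x = f / g}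

/-- `M := Y·F[Y]_{(Y)} = ⋃ₙ Mₙ`. -/
def MsetU : Set (Amb k0 r) :=
  {x | ∃ v ∈ VsetU k0 r, x = ambY k0 r * v}

/-- `A := k + M = ⋃ₙ Aₙ`. -/
def AsetU : Set (Amb k0 r) :=
  {x | ∃ c ∈ kfldU k0 r, ∃ m ∈ MsetU k0 r, x = c + m}

/-- `X′ₙ := (1 + Y·Xₙ)/Y`. -/
def ambX' (n : ℕ) : Amb k0 r :=
  (1 + ambY k0 r * ambX k0 r n) / ambY k0 r

/-- `1` belongs to the ideal of `W` generated by the coefficients of `g`, where `W` is a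
subring (given as a subset `S`) of the ambient field. -/
def unitContent (S : Set (Amb k0 r)) (g : Polynomial (Amb k0 r)) : Prop :=
  ∃ (t : Finset ℕ) (u : ℕ → Amb k0 r), (∀ i ∈ t, u i ∈ S) ∧ ∑ i ∈ t, u i * g.coeff i = 1

/-- The Nagata ring `W(T)` of a subring `W ⊆ Amb k0 r` (given as a subset `S`) in the
"variable" `T`: all fractions `f(T)/g(T)` with `f, g ∈ W[T]` and the coefficients of `g`
generating the unit ideal of `W`.  (When `T` is transcendental over `W` this is the usual
Nagata ring.) -/
def nagataSet (S : Set (Amb k0 r)) (T : Amb k0 r) : Set (Amb k0 r) :=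
  {x | ∃ f g : Polynomial (Amb k0 r), (∀ i, f.coeff i ∈ S) ∧ (∀ i, g.coeff i ∈ S) ∧
    unitContent k0 r S g ∧ x = f.eval T / g.eval T}

/-- The valuation overrings of a ring `D` (given as a subset) inside a subfield `L` of the
ambient field: subrings `W` with `D ⊆ W ⊆ L` such that for every `x ∈ L`, `x ∈ W` or
`x⁻¹ ∈ W`. -/
def valOverringsIn (D : Set (Amb k0 r)) (L : Subfield (Amb k0 r)) : Set (Subring (Amb k0 r)) :=
  {W | D ⊆ ↑W ∧ (W : Set (Amb k0 r)) ⊆ (L : Set (Amb k0 r)) ∧ ∀ x ∈ L, x ∈ W ∨ x⁻¹ ∈ W}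

/-- The Kronecker function ring `Kr_{L(T)}(D, b) = ⋂ {W(T) : W a valuation overring of `D`
in `L`}`, realized as a subset of the ambient field. -/
def krSet (D : Set (Amb k0 r)) (L : Subfield (Amb k0 r)) (T : Amb k0 r) : Set (Amb k0 r) :=
  ⋂ W ∈ valOverringsIn k0 r D L, nagataSet k0 r (↑W) T

/-- The tower `Dₙ`: `D₁ := A₁` and `Dₙ := Bₙ ∩ Aₙ` for `n ≥ 2`, where
`Bₙ := Kr_{K_{n-1}(X′ₙ)}(D_{n-1}, b)`.  (The value at `0` is junk, set to `D₁`.) -/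
def Dset : ℕ → Set (Amb k0 r)
  | 0 => Aset k0 r 1
  | 1 => Aset k0 r 1
  | n + 2 => krSet k0 r (Dset (n + 1)) (Kfld k0 r (n + 1)) (ambX' k0 r (n + 2)) ∩ Aset k0 r (n + 2)

/-- `Bₙ := Kr_{K_{n-1}(X′ₙ)}(D_{n-1}, b)` (meaningful for `n ≥ 2`). -/
def Bset (n : ℕ) : Set (Amb k0 r) :=
  krSet k0 r (Dset k0 r (n - 1)) (Kfld k0 r (n - 1)) (ambX' k0 r n)

/-- `𝓜ₙ := Mₙ ∩ Dₙ`. -/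
def MMset (n : ℕ) : Set (Amb k0 r) := Mset k0 r n ∩ Dset k0 r n

/-- `D := ⋃__{n ≥ 1} Dₙ`. -/
def DsetU : Set (Amb k0 r) := ⋃ n, Dset k0 r n

/-- `𝓜 := ⋃_{n ≥ 2} 𝓜ₙ`. -/
def MMsetU : Set (Amb k0 r) := ⋃ n, MMset k0 r (n + 2)

/-- The localization `D_m = {a/b : a, b ∈ D, b ∉ m}` of a subring `D` of the ambient
field (given as a subset) at (the complement of) a subset `m`. -/
def locAt (D m : Set (Amb k0 r)) : Set (Amb k0 r) :=
  {x | ∃ a ∈ D, ∃ b ∈ D, b ∉ m ∧ x = a / b}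

/-- The quotient field, inside the ambient field, of a subring given as a subset. -/
def qfSet (D : Set (Amb k0 r)) : Set (Amb k0 r) :=
  {x | ∃ a ∈ D, ∃ b ∈ D, b ≠ 0 ∧ x = a / b}

/-- The nonunits of a subring of the ambient field, given as a subset: in a local
subring of a field these form the maximal ideal. -/
def nonunitsIn (S : Set (Amb k0 r)) : Set (Amb k0 r) :=
  {x | x ∈ S ∧ (x = 0 ∨ x⁻¹ ∉ S)}

/-- A subring `A` of the ambient field is a pseudo-valuation domain: it is local, and its
maximal ideal (= set of nonunits) is also the maximal ideal of some valuation overring of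
`A` in its quotient field. -/
def IsPVDSub (A : Subring (Amb k0 r)) : Prop :=
  IsLocalRing ↥A ∧
  ∃ W : Subring (Amb k0 r), (A : Set (Amb k0 r)) ⊆ ↑W ∧
    (W : Set (Amb k0 r)) ⊆ qfSet k0 r ↑A ∧
    (∀ x ∈ qfSet k0 r (A : Set (Amb k0 r)), x ∈ W ∨ x⁻¹ ∈ W) ∧
    nonunitsIn k0 r ↑A = nonunitsIn k0 r ↑W

/-- The valuative dimension of a subring of the ambient field: the supremum of the Krull
dimensions of its valuation overrings (in its quotient field). -/
def subValuativeDim (A : Subring (Amb k0 r)) : WithBot ℕ∞ :=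
  ⨆ W : {W : Subring (Amb k0 r) // (A : Set (Amb k0 r)) ⊆ ↑W ∧
      (W : Set (Amb k0 r)) ⊆ qfSet k0 r ↑A ∧
      ∀ x ∈ qfSet k0 r (A : Set (Amb k0 r)), x ∈ W ∨ x⁻¹ ∈ W},
    ringKrullDim ↥(W : Subring (Amb k0 r))


/-- `1` belongs to the ideal generated by the coefficients of a multivariable polynomial
`g` in the subring given by the subset `S`. -/
def mvUnitContent (S : Set (Amb k0 r)) (g : MvPolynomial ℕ (Amb k0 r)) : Prop :=
  ∃ (t : Finset (ℕ →₀ ℕ)) (u : (ℕ →₀ ℕ) → Amb k0 r),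
    (∀ m ∈ t, u m ∈ S) ∧ ∑ m ∈ t, u m * MvPolynomial.coeff m g = 1

/-- The Nagata ring `W(T₀, T₁, …)` of a subring `W` of the ambient field (given as a
subset `S`) in countably many "variables" `T j`: all fractions `f(T)/g(T)` with
`f, g ∈ W[T₀, T₁, …]` and the coefficients of `g` generating the unit ideal of `W`. -/
def nagataSetMv (S : Set (Amb k0 r)) (T : ℕ → Amb k0 r) : Set (Amb k0 r) :=
  {x | ∃ f g : MvPolynomial ℕ (Amb k0 r),
    (∀ m, MvPolynomial.coeff m f ∈ S) ∧ (∀ m, MvPolynomial.coeff m g ∈ S) ∧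
    mvUnitContent k0 r S g ∧ x = MvPolynomial.eval T f / MvPolynomial.eval T g}

/-- A subring `S` of the ambient field is an *essential* domain: `S` is the intersection
of a family of localizations `S_p` at primes `p ∈ Δ`, each of which is a valuation domain
(with quotient field the quotient field of `S`). -/
def IsEssentialSub (S : Subring (Amb k0 r)) : Prop :=
  ∃ Δ : Set (Ideal ↥S),
    (∀ p ∈ Δ, p.IsPrime) ∧
    (∀ p ∈ Δ, ∀ x ∈ qfSet k0 r (S : Set (Amb k0 r)),
      x ∈ locAt k0 r ↑S (Subtype.val '' (p : Set ↥S)) ∨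
      x⁻¹ ∈ locAt k0 r ↑S (Subtype.val '' (p : Set ↥S))) ∧
    (S : Set (Amb k0 r)) = ⋂ p ∈ Δ, locAt k0 r ↑S (Subtype.val '' (p : Set ↥S))

end

namespace TowerAux

open Polynomial

section abstractPart
variable {E : Type*} [Field E]

theorem one_add_ne {P : Subring E} {Y : E} (hY : ∀ h ∈ P, Y * h ≠ 1) {h : E} (hh : h ∈ P) :
    1 + Y * h ≠ 0 := fun e => hY (-h) (P.neg_mem hh) (by linear_combination -e)

/-- The ring of fractions `f / (1 + Y h)` with `f, h ∈ P`. -/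
def VP (P : Subring E) (Y : E) (hYP : Y ∈ P) (hY : ∀ h ∈ P, Y * h ≠ 1) : Subring E where
  carrier := {x | ∃ f ∈ P, ∃ h ∈ P, x = f / (1 + Y * h)}
  zero_mem' := ⟨0, P.zero_mem, 0, P.zero_mem, by simp⟩
  one_mem' := ⟨1, P.one_mem, 0, P.zero_mem, by simp⟩
  add_mem' := by
    rintro _ _ ⟨f, hf, h, hh, rfl⟩ ⟨f', hf', h', hh', rfl⟩
    have h1 := one_add_ne hY hh
    have h2 := one_add_ne hY hh'
    refine ⟨f * (1 + Y * h') + f' * (1 + Y * h), ?_, h + h' + Y * h * h', ?_, ?_⟩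
    · exact P.add_mem (P.mul_mem hf (P.add_mem P.one_mem (P.mul_mem hYP hh')))
          (P.mul_mem hf' (P.add_mem P.one_mem (P.mul_mem hYP hh)))
    · exact P.add_mem (P.add_mem hh hh') (P.mul_mem (P.mul_mem hYP hh) hh')
    · have : 1 + Y * (h + h' + Y * h * h') = (1 + Y * h) * (1 + Y * h') := by ring
      rw [this, div_add_div _ _ h1 h2]; ring
  neg_mem' := by
    rintro _ ⟨f, hf, h, hh, rfl⟩
    exact ⟨-f, P.neg_mem hf, h, hh, by ring⟩
  mul_mem' := by
    rintro _ _ ⟨f, hf, h, hh, rfl⟩ ⟨f', hf', h', hh', rfl⟩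
    refine ⟨f * f', P.mul_mem hf hf', h + h' + Y * h * h', ?_, ?_⟩
    · exact P.add_mem (P.add_mem hh hh') (P.mul_mem (P.mul_mem hYP hh) hh')
    · have : 1 + Y * (h + h' + Y * h * h') = (1 + Y * h) * (1 + Y * h') := by ring
      rw [this, div_mul_div_comm]

variable {P : Subring E} {Y : E} {hYP : Y ∈ P} {hY : ∀ h ∈ P, Y * h ≠ 1}

theorem P_le_VP : P ≤ VP P Y hYP hY := fun f hf => ⟨f, hf, 0, P.zero_mem, by simp⟩

theorem VP_one_add_ne {v : E} (hv : v ∈ VP P Y hYP hY) : 1 + Y * v ≠ 0 := by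
  obtain ⟨f, hf, h, hh, rfl⟩ := hv
  have h1 := one_add_ne hY hh
  have h2 := one_add_ne hY (P.add_mem hf hh)
  intro e
  apply h2
  field_simp at e
  linear_combination e

theorem VP_inv {v : E} (hv : v ∈ VP P Y hYP hY) : (1 + Y * v)⁻¹ ∈ VP P Y hYP hY := by
  obtain ⟨f, hf, h, hh, rfl⟩ := hv
  have h1 := one_add_ne hY hh
  have h2 := one_add_ne hY (P.add_mem hf hh)
  refine ⟨1 + Y * h, P.add_mem P.one_mem (P.mul_mem hYP hh), f + h, P.add_mem hf hh, ?_⟩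
  have : 1 + Y * (f / (1 + Y * h)) = (1 + Y * (f + h)) / (1 + Y * h) := by
    field_simp; ring
  rw [this, inv_div]

theorem closure_form {F : Subfield E} {Y g : E}
    (hg : g ∈ Subring.closure ((F : Set E) ∪ {Y})) :
    ∃ c ∈ F, ∃ h ∈ Subring.closure ((F : Set E) ∪ {Y}), g = c + Y * h := by
  set P := Subring.closure ((F : Set E) ∪ {Y}) with hP
  have hFP : ∀ c ∈ F, c ∈ P := fun c hc => Subring.subset_closure (Or.inl hc)
  have hYP : Y ∈ P := Subring.subset_closure (Or.inr rfl)
  induction hg using Subring.closure_induction with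
  | mem x hx =>
    rcases hx with hx | hx
    · exact ⟨x, hx, 0, P.zero_mem, by simp⟩
    · exact ⟨0, F.zero_mem, 1, P.one_mem, by simpa using hx⟩
  | zero => exact ⟨0, F.zero_mem, 0, P.zero_mem, by simp⟩
  | one => exact ⟨1, F.one_mem, 0, P.zero_mem, by simp⟩
  | add x y hx hy ihx ihy =>
    obtain ⟨c, hc, h, hh, e⟩ := ihx
    obtain ⟨c', hc', h', hh', e'⟩ := ihy
    exact ⟨c + c', F.add_mem hc hc', h + h', P.add_mem hh hh', by rw [e, e']; ring⟩
  | neg x hx ihx =>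
    obtain ⟨c, hc, h, hh, e⟩ := ihx
    exact ⟨-c, F.neg_mem hc, -h, P.neg_mem hh, by rw [e]; ring⟩
  | mul x y hx hy ihx ihy =>
    obtain ⟨c, hc, h, hh, e⟩ := ihx
    obtain ⟨c', hc', h', hh', e'⟩ := ihy
    refine ⟨c * c', F.mul_mem hc hc', c * h' + h * y, 
      P.add_mem (P.mul_mem (hFP c hc) hh') (P.mul_mem hh hy), ?_⟩
    rw [e, e']; ring

theorem closure_poly {F : Subfield E} {Y g : E}
    (hg : g ∈ Subring.closure ((F : Set E) ∪ {Y})) : ∃ p : Polynomial F, g = aeval Y p := by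
  induction hg using Subring.closure_induction with
  | mem x hx =>
    rcases hx with hx | hx
    · exact ⟨C ⟨x, hx⟩, by simp; rfl⟩
    · exact ⟨X, by simpa using hx⟩
  | zero => exact ⟨0, by simp⟩
  | one => exact ⟨1, by simp⟩
  | add x y hx hy ihx ihy =>
    obtain ⟨p, rfl⟩ := ihx
    obtain ⟨q, rfl⟩ := ihy
    exact ⟨p + q, by simp⟩
  | neg x hx ihx =>
    obtain ⟨p, rfl⟩ := ihx
    exact ⟨-p, by simp⟩
  | mul x y hx hy ihx ihy =>
    obtain ⟨p, rfl⟩ := ihx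
    obtain ⟨q, rfl⟩ := ihy
    exact ⟨p * q, by simp⟩

theorem aeval_mem {F : Subfield E} {Y : E} (p : Polynomial F) :
    aeval Y p ∈ Subring.closure ((F : Set E) ∪ {Y}) := by
  rw [aeval_eq_sum_range]
  refine Subring.sum_mem _ fun i _ => ?_
  rw [Algebra.smul_def]
  exact Subring.mul_mem _ (Subring.subset_closure (Or.inl (p.coeff i).2))
    (pow_mem (Subring.subset_closure (Set.mem_union_right _ (Set.mem_singleton Y))) _)

theorem closure_order {F : Subfield E} {Y g : E}
    (hg : g ∈ Subring.closure ((F : Set E) ∪ {Y})) (hg0 : g ≠ 0) :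
    ∃ j : ℕ, ∃ c ∈ F, c ≠ 0 ∧ ∃ h ∈ Subring.closure ((F : Set E) ∪ {Y}),
      g = Y ^ j * (c * (1 + Y * h)) := by
  obtain ⟨p, rfl⟩ := closure_poly hg
  have hp : p ≠ 0 := by rintro rfl; simp at hg0
  obtain ⟨q, hq, hnd⟩ := Polynomial.exists_eq_pow_rootMultiplicity_mul_and_not_dvd p hp 0
  simp only [map_zero, sub_zero] at hq hnd
  rw [Polynomial.X_dvd_iff] at hnd
  have hc : ((q.coeff 0 : F) : E) ≠ 0 := by simpa using hnd
  refine ⟨rootMultiplicity 0 p, q.coeff 0, (q.coeff 0).2, hc, (q.coeff 0 : E)⁻¹ * aeval Y q.divX, ?_, ?_⟩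
  · exact Subring.mul_mem _ (Subring.subset_closure (Or.inl (F.inv_mem (q.coeff 0).2)))
      (aeval_mem _)
  · conv_lhs => rw [hq, map_mul, map_pow, aeval_X, ← Polynomial.divX_mul_X_add q]
    simp only [map_add, map_mul, aeval_X, aeval_C]
    change _ * (_ + (q.coeff 0 : E)) = _
    field_simp
    ring

theorem VP_order {F : Subfield E} {Y : E} {hYP} {hY} {q : E}
    (hq : q ∈ VP (Subring.closure ((F : Set E) ∪ {Y})) Y hYP hY) (hq0 : q ≠ 0) :
    ∃ j : ℕ, Y ^ j / q ∈ VP (Subring.closure ((F : Set E) ∪ {Y})) Y hYP hY := by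
  obtain ⟨f, hf, h, hh, rfl⟩ := hq
  have h1 := one_add_ne hY hh
  have hf0 : f ≠ 0 := by rintro rfl; simp at hq0
  obtain ⟨j, c, hc, hc0, h', hh', rfl⟩ := closure_order hf hf0
  have h2 := one_add_ne hY hh'
  refine ⟨j, c⁻¹ * (1 + Y * h), ?_, h', hh', ?_⟩
  · exact Subring.mul_mem _ (Subring.subset_closure (Or.inl (F.inv_mem hc)))
      (Subring.add_mem _ (Subring.one_mem _) (Subring.mul_mem _ hYP hh))
  · have hY0 : Y ^ j ≠ 0 := by intro e; simp [e] at hf0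
    field_simp

theorem frac_eq_VP {F : Subfield E} {Y : E} {hYP} {hY} :
    {x | ∃ f ∈ Subring.closure ((F : Set E) ∪ {Y}), ∃ g ∈ Subring.closure ((F : Set E) ∪ {Y}),
      (¬ ∃ h ∈ Subring.closure ((F : Set E) ∪ {Y}), g = Y * h) ∧ x = f / g} =
    (VP (Subring.closure ((F : Set E) ∪ {Y})) Y hYP hY : Set E) := by
  ext x
  constructor
  · rintro ⟨f, hf, g, hg, hn, rfl⟩
    obtain ⟨c, hc, h, hh, rfl⟩ := closure_form hg
    have hc0 : c ≠ 0 := by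
      rintro rfl
      exact hn ⟨h, hh, by simp⟩
    have hci : c⁻¹ ∈ Subring.closure ((F : Set E) ∪ {Y}) :=
      Subring.subset_closure (Or.inl (F.inv_mem hc))
    refine ⟨c⁻¹ * f, Subring.mul_mem _ hci hf, c⁻¹ * h, Subring.mul_mem _ hci hh, ?_⟩
    have : c + Y * h = c * (1 + Y * (c⁻¹ * h)) := by field_simp
    rw [this, ← div_div, div_eq_inv_mul f c]
  · rintro ⟨f, hf, h, hh, rfl⟩
    refine ⟨f, hf, _, Subring.add_mem _ (Subring.one_mem _) (Subring.mul_mem _ hYP hh), ?_, rfl⟩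
    rintro ⟨h', hh', e⟩
    exact hY (h' - h) (Subring.sub_mem _ hh' hh) (by linear_combination -e)

/-- The minimal-coefficient lemma in a valuation ring. -/
theorem exists_min {L : Subfield E} {W : Subring E} (hW : ∀ x ∈ L, x ∈ W ∨ x⁻¹ ∈ W)
    (s : Finset E) (hs : ∀ a ∈ s, a ∈ L) (h0 : ∃ a ∈ s, a ≠ 0) :
    ∃ c ∈ s, c ≠ 0 ∧ ∀ a ∈ s, c⁻¹ * a ∈ W := by
  classical
  induction s using Finset.induction_on with
  | empty => simp at h0
  | insert b s hb ih =>
    by_cases h1 : ∃ a ∈ s, a ≠ 0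
    · obtain ⟨c, hc, hc0, H⟩ := ih (fun a ha => hs a (Finset.mem_insert_of_mem ha)) h1
      rcases hW (c⁻¹ * b) (L.mul_mem (L.inv_mem (hs c (Finset.mem_insert_of_mem hc)))
        (hs b (Finset.mem_insert_self _ _))) with h | h
      · refine ⟨c, Finset.mem_insert_of_mem hc, hc0, fun a ha => ?_⟩
        rcases Finset.mem_insert.1 ha with rfl | ha
        · exact h
        · exact H a ha
      · by_cases hb0 : b = 0
        · refine ⟨c, Finset.mem_insert_of_mem hc, hc0, fun a ha => ?_⟩
          rcases Finset.mem_insert.1 ha with rfl | ha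
          · simp [hb0, W.zero_mem]
          · exact H a ha
        · refine ⟨b, Finset.mem_insert_self _ _, hb0, fun a ha => ?_⟩
          rcases Finset.mem_insert.1 ha with rfl | ha
          · simp [hb0, W.one_mem]
          · have : b⁻¹ * a = (c⁻¹ * b)⁻¹ * (c⁻¹ * a) := by field_simp
            rw [this]
            exact W.mul_mem h (H a ha)
    · push Not at h1
      obtain ⟨a, ha, ha0⟩ := h0
      rcases Finset.mem_insert.1 ha with rfl | ha
      · refine ⟨a, Finset.mem_insert_self _ _, ha0, fun a' ha' => ?_⟩
        rcases Finset.mem_insert.1 ha' with rfl | ha'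
        · simp [ha0, W.one_mem]
        · simp [h1 a' ha', W.zero_mem]
      · exact absurd (h1 a ha) ha0

end abstractPart

section concrete
variable (k0 : Type) [Field k0] (r : ℕ)

/-- The `k0`-algebra generated by all the indeterminates except `Y`. -/
noncomputable def R0 : Subalgebra k0 (Amb k0 r) :=
  Algebra.adjoin k0 ((fun i => algebraMap (MvPolynomial (TowerVars r) k0) (Amb k0 r)
    (MvPolynomial.X i)) '' {Sum.inr (Sum.inl ())}ᶜ)

theorem Y_transc : Transcendental (R0 k0 r) (ambY k0 r) := by
  have h : AlgebraicIndependent k0 (fun i : TowerVars r =>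
      algebraMap (MvPolynomial (TowerVars r) k0) (Amb k0 r) (MvPolynomial.X i)) := by
    have := (MvPolynomial.algebraicIndependent_X (TowerVars r) k0).map'
      (f := IsScalarTower.toAlgHom k0 (MvPolynomial (TowerVars r) k0) (Amb k0 r))
      (IsFractionRing.injective _ _)
    exact this
  exact h.transcendental_adjoin (s := {Sum.inr (Sum.inl ())}ᶜ) (i := Sum.inr (Sum.inl ()))
    (by simp)

theorem baseSet_sub {x} (hx : x ∈ baseSet k0 r) : x ∈ R0 k0 r := by
  obtain ⟨c, rfl⟩ := hx
  exact (R0 k0 r).algebraMap_mem c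

theorem ambX_mem (n : ℕ) : ambX k0 r n ∈ R0 k0 r :=
  Algebra.subset_adjoin ⟨Sum.inl n, by simp, rfl⟩

theorem ambZ_mem (i) : ambZ k0 r i ∈ R0 k0 r :=
  Algebra.subset_adjoin ⟨Sum.inr (Sum.inr i), by simp, rfl⟩

/-- The fraction field of `R0`. -/
noncomputable def Q0 : Subfield (Amb k0 r) := Subfield.closure (R0 k0 r : Set (Amb k0 r))

theorem mem_Q0 {x} (hx : x ∈ Q0 k0 r) : ∃ a ∈ R0 k0 r, ∃ b ∈ R0 k0 r, b ≠ 0 ∧ x = a / b := by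
  induction hx using Subfield.closure_induction with
  | mem x hx => exact ⟨x, hx, 1, (R0 k0 r).one_mem, one_ne_zero, by simp⟩
  | one => exact ⟨1, (R0 k0 r).one_mem, 1, (R0 k0 r).one_mem, one_ne_zero, by simp⟩
  | add x y hx hy ihx ihy =>
    obtain ⟨a, ha, b, hb, hb0, rfl⟩ := ihx
    obtain ⟨a', ha', b', hb', hb0', rfl⟩ := ihy
    exact ⟨a * b' + b * a', add_mem (mul_mem ha hb') (mul_mem hb ha'), b * b', mul_mem hb hb',
      mul_ne_zero hb0 hb0', div_add_div _ _ hb0 hb0'⟩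
  | neg x hx ihx =>
    obtain ⟨a, ha, b, hb, hb0, rfl⟩ := ihx
    exact ⟨-a, neg_mem ha, b, hb, hb0, by ring⟩
  | inv x hx ihx =>
    obtain ⟨a, ha, b, hb, hb0, rfl⟩ := ihx
    by_cases ha0 : a = 0
    · exact ⟨0, zero_mem _, 1, one_mem _, one_ne_zero, by simp [ha0]⟩
    · exact ⟨b, hb, a, ha, ha0, by rw [inv_div]⟩
  | mul x y hx hy ihx ihy =>
    obtain ⟨a, ha, b, hb, hb0, rfl⟩ := ihx
    obtain ⟨a', ha', b', hb', hb0', rfl⟩ := ihy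
    exact ⟨a * a', mul_mem ha ha', b * b', mul_mem hb hb',
      mul_ne_zero hb0 hb0', div_mul_div_comm _ _ _ _⟩

theorem Q0_clear {x} (hx : x ∈ Subring.closure ((Q0 k0 r : Set (Amb k0 r)) ∪ {ambY k0 r})) :
    ∃ b : R0 k0 r, b ≠ 0 ∧ ∃ p : Polynomial (R0 k0 r), (b : Amb k0 r) * x = aeval (ambY k0 r) p := by
  induction hx using Subring.closure_induction with
  | mem x hx =>
    rcases hx with hx | hx
    · obtain ⟨a, ha, b, hb, hb0, rfl⟩ := mem_Q0 k0 r hx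
      refine ⟨⟨b, hb⟩, fun e => hb0 (congrArg Subtype.val e), C ⟨a, ha⟩, ?_⟩
      rw [aeval_C]
      change b * (a / b) = a
      field_simp
    · refine ⟨1, one_ne_zero, X, ?_⟩
      rw [aeval_X]
      simpa using hx
  | zero => exact ⟨1, one_ne_zero, 0, by simp⟩
  | one => exact ⟨1, one_ne_zero, 1, by simp⟩
  | add x y hx hy ihx ihy =>
    obtain ⟨b, hb, p, e⟩ := ihx
    obtain ⟨b', hb', p', e'⟩ := ihy
    refine ⟨b * b', mul_ne_zero hb hb', C b' * p + C b * p', ?_⟩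
    simp only [map_add, map_mul, aeval_C, ← e, ← e']
    change (b * b' : Amb k0 r) * _ = (b' : Amb k0 r) * _ + (b : Amb k0 r) * _
    ring
  | neg x hx ihx =>
    obtain ⟨b, hb, p, e⟩ := ihx
    refine ⟨b, hb, C (-1) * p, ?_⟩
    rw [map_mul, aeval_C, ← e]
    change _ = (-1 : Amb k0 r) * _
    ring
  | mul x y hx hy ihx ihy =>
    obtain ⟨b, hb, p, e⟩ := ihx
    obtain ⟨b', hb', p', e'⟩ := ihy
    refine ⟨b * b', mul_ne_zero hb hb', p * p', ?_⟩
    simp only [map_mul, ← e, ← e']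
    change (b * b' : Amb k0 r) * _ = _
    ring

theorem hYQ : ∀ h ∈ Subring.closure ((Q0 k0 r : Set (Amb k0 r)) ∪ {ambY k0 r}),
    ambY k0 r * h ≠ 1 := by
  intro h hh e
  obtain ⟨b, hb, p, hp⟩ := Q0_clear k0 r hh
  have h0 : aeval (ambY k0 r) (X * p + C (-b)) = 0 := by
    rw [map_add, map_mul, aeval_X, aeval_C, ← hp]
    change _ * ((b : Amb k0 r) * h) + (-(b : Amb k0 r)) = 0
    linear_combination (b : Amb k0 r) * e
  have h1 : X * p + C (-b) = 0 := by
    by_contra hne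
    exact Y_transc k0 r ⟨_, hne, h0⟩
  apply hb
  have := congrArg (fun q => q.coeff 0) h1
  simpa using this

theorem kfld_le_Q0 (n) : kfld k0 r n ≤ Q0 k0 r := by
  refine Subfield.closure_le.2 ?_
  rintro x (hx | ⟨i, -, -, rfl⟩)
  · exact Subfield.subset_closure (baseSet_sub k0 r hx)
  · exact Subfield.subset_closure (ambX_mem k0 r i)

theorem Ffld_le_Q0 (n) : Ffld k0 r n ≤ Q0 k0 r := by
  refine Subfield.closure_le.2 ?_
  rintro x (hx | ⟨i, rfl⟩)
  · exact kfld_le_Q0 k0 r n hx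
  · exact Subfield.subset_closure (ambZ_mem k0 r i)

theorem FfldU_le_Q0 : FfldU k0 r ≤ Q0 k0 r := by
  refine Subfield.closure_le.2 ?_
  rintro x (hx | ⟨i, rfl⟩)
  · obtain ⟨n, hn⟩ := Set.mem_iUnion.1 hx
    exact kfld_le_Q0 k0 r n hn
  · exact Subfield.subset_closure (ambZ_mem k0 r i)

theorem hYn (n) : ∀ h ∈ Subring.closure ((Ffld k0 r n : Set (Amb k0 r)) ∪ {ambY k0 r}),
    ambY k0 r * h ≠ 1 := fun h hh =>
  hYQ k0 r h (Subring.closure_mono (Set.union_subset_union_left _ (Ffld_le_Q0 k0 r n)) hh)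

theorem hYU : ∀ h ∈ Subring.closure ((FfldU k0 r : Set (Amb k0 r)) ∪ {ambY k0 r}),
    ambY k0 r * h ≠ 1 := fun h hh =>
  hYQ k0 r h (Subring.closure_mono (Set.union_subset_union_left _ (FfldU_le_Q0 k0 r)) hh)

theorem Y_mem_cl (F : Subfield (Amb k0 r)) :
    ambY k0 r ∈ Subring.closure ((F : Set (Amb k0 r)) ∪ {ambY k0 r}) :=
  Subring.subset_closure (Or.inr rfl)

/-- `Vₙ` as a subring. -/
noncomputable def Vn (n : ℕ) : Subring (Amb k0 r) :=
  VP (Subring.closure ((Ffld k0 r n : Set (Amb k0 r)) ∪ {ambY k0 r})) (ambY k0 r)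
    (Y_mem_cl k0 r _) (hYn k0 r n)

/-- `V` as a subring. -/
noncomputable def VU : Subring (Amb k0 r) :=
  VP (Subring.closure ((FfldU k0 r : Set (Amb k0 r)) ∪ {ambY k0 r})) (ambY k0 r)
    (Y_mem_cl k0 r _) (hYU k0 r)

theorem Vset_eq (n) : Vset k0 r n = Vn k0 r n := frac_eq_VP
theorem VsetU_eq : VsetU k0 r = VU k0 r := frac_eq_VP

theorem mem_Mset {n x} : x ∈ Mset k0 r n ↔ ∃ v ∈ Vn k0 r n, x = ambY k0 r * v := by
  unfold Mset; rw [Vset_eq]; rfl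

theorem mem_MsetU {x} : x ∈ MsetU k0 r ↔ ∃ v ∈ VU k0 r, x = ambY k0 r * v := by
  unfold MsetU; rw [VsetU_eq]; rfl

theorem kfld_mono {m n : ℕ} (h : m ≤ n) : kfld k0 r m ≤ kfld k0 r n := by
  refine Subfield.closure_mono (Set.union_subset_union_right _ ?_)
  rintro x ⟨i, h1, h2, e⟩
  exact ⟨i, h1, h2.trans h, e⟩

theorem Ffld_mono {m n : ℕ} (h : m ≤ n) : Ffld k0 r m ≤ Ffld k0 r n :=
  Subfield.closure_mono (Set.union_subset_union_left _ (kfld_mono k0 r h))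

theorem Kfld_mono {m n : ℕ} (h : m ≤ n) : Kfld k0 r m ≤ Kfld k0 r n :=
  Subfield.closure_mono (Set.union_subset_union_left _ (Ffld_mono k0 r h))

theorem Ffld_le_U (n) : Ffld k0 r n ≤ FfldU k0 r :=
  Subfield.closure_mono (Set.union_subset_union_left _
    (Set.subset_iUnion (fun n => (kfld k0 r n : Set (Amb k0 r))) n))

theorem Vn_mono {m n : ℕ} (h : m ≤ n) : Vn k0 r m ≤ Vn k0 r n := by
  rintro x ⟨f, hf, g, hg, rfl⟩
  have := Subring.closure_mono (Set.union_subset_union_left {ambY k0 r} (Ffld_mono k0 r h))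
  exact ⟨f, this hf, g, this hg, rfl⟩

theorem Vn_le_U (n : ℕ) : Vn k0 r n ≤ VU k0 r := by
  rintro x ⟨f, hf, g, hg, rfl⟩
  have := Subring.closure_mono (Set.union_subset_union_left {ambY k0 r} (Ffld_le_U k0 r n))
  exact ⟨f, this hf, g, this hg, rfl⟩

theorem FfldU_mem {x} (hx : x ∈ FfldU k0 r) : ∃ n, x ∈ Ffld k0 r n := by
  induction hx using Subfield.closure_induction with
  | mem x hx =>
    rcases hx with hx | hx
    · obtain ⟨n, hn⟩ := Set.mem_iUnion.1 hx
      exact ⟨n, Subfield.subset_closure (Or.inl hn)⟩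
    · exact ⟨0, Subfield.subset_closure (Or.inr hx)⟩
  | one => exact ⟨0, one_mem _⟩
  | add x y hx hy ihx ihy =>
    obtain ⟨a, ha⟩ := ihx
    obtain ⟨b, hb⟩ := ihy
    exact ⟨max a b, add_mem (Ffld_mono k0 r (le_max_left a b) ha)
      (Ffld_mono k0 r (le_max_right a b) hb)⟩
  | neg x hx ihx => 
    obtain ⟨a, ha⟩ := ihx
    exact ⟨a, neg_mem ha⟩
  | inv x hx ihx => 
    obtain ⟨a, ha⟩ := ihx
    exact ⟨a, inv_mem ha⟩
  | mul x y hx hy ihx ihy =>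
    obtain ⟨a, ha⟩ := ihx
    obtain ⟨b, hb⟩ := ihy
    exact ⟨max a b, mul_mem (Ffld_mono k0 r (le_max_left a b) ha)
      (Ffld_mono k0 r (le_max_right a b) hb)⟩

theorem polyU_mem {x} (hx : x ∈ Subring.closure ((FfldU k0 r : Set (Amb k0 r)) ∪ {ambY k0 r})) :
    ∃ n, x ∈ Subring.closure ((Ffld k0 r n : Set (Amb k0 r)) ∪ {ambY k0 r}) := by
  have mono : ∀ {m n : ℕ}, m ≤ n → Subring.closure ((Ffld k0 r m : Set (Amb k0 r)) ∪ {ambY k0 r})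
      ≤ Subring.closure ((Ffld k0 r n : Set (Amb k0 r)) ∪ {ambY k0 r}) := fun h =>
    Subring.closure_mono (Set.union_subset_union_left {ambY k0 r} (Ffld_mono k0 r h))
  induction hx using Subring.closure_induction with
  | mem x hx =>
    rcases hx with hx | hx
    · obtain ⟨n, hn⟩ := FfldU_mem k0 r hx
      exact ⟨n, Subring.subset_closure (Or.inl hn)⟩
    · exact ⟨0, Subring.subset_closure (Or.inr hx)⟩
  | zero => exact ⟨0, zero_mem _⟩
  | one => exact ⟨0, one_mem _⟩
  | add x y hx hy ihx ihy =>
    obtain ⟨a, ha⟩ := ihx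
    obtain ⟨b, hb⟩ := ihy
    exact ⟨max a b, add_mem (mono (le_max_left a b) ha) (mono (le_max_right a b) hb)⟩
  | neg x hx ihx => 
    obtain ⟨a, ha⟩ := ihx
    exact ⟨a, neg_mem ha⟩
  | mul x y hx hy ihx ihy =>
    obtain ⟨a, ha⟩ := ihx
    obtain ⟨b, hb⟩ := ihy
    exact ⟨max a b, mul_mem (mono (le_max_left a b) ha) (mono (le_max_right a b) hb)⟩

theorem VU_mem {x} (hx : x ∈ VU k0 r) : ∃ n, x ∈ Vn k0 r n := by
  obtain ⟨f, hf, g, hg, rfl⟩ := hx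
  obtain ⟨a, ha⟩ := polyU_mem k0 r hf
  obtain ⟨b, hb⟩ := polyU_mem k0 r hg
  refine ⟨max a b, f, ?_, g, ?_, rfl⟩
  · exact Subring.closure_mono (Set.union_subset_union_left {ambY k0 r}
      (Ffld_mono k0 r (le_max_left a b))) ha
  · exact Subring.closure_mono (Set.union_subset_union_left {ambY k0 r}
      (Ffld_mono k0 r (le_max_right a b))) hb

theorem Mset_mono {m n : ℕ} (h : m ≤ n) : Mset k0 r m ⊆ Mset k0 r n := by
  intro x hx
  obtain ⟨v, hv, rfl⟩ := (mem_Mset k0 r).1 hx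
  exact (mem_Mset k0 r).2 ⟨v, Vn_mono k0 r h hv, rfl⟩

theorem Aset_mono {m n : ℕ} (h : m ≤ n) : Aset k0 r m ⊆ Aset k0 r n := by
  rintro x ⟨c, hc, m, hm, rfl⟩
  exact ⟨c, kfld_mono k0 r h hc, m, Mset_mono k0 r h hm, rfl⟩

theorem Aset_sub_U (n) : Aset k0 r n ⊆ AsetU k0 r := by
  rintro x ⟨c, hc, m, hm, rfl⟩
  obtain ⟨v, hv, rfl⟩ := (mem_Mset k0 r).1 hm
  exact ⟨c, Set.mem_iUnion.2 ⟨n, hc⟩, _, (mem_MsetU k0 r).2 ⟨v, Vn_le_U k0 r n hv, rfl⟩, rfl⟩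

theorem AsetU_mem {x} (hx : x ∈ AsetU k0 r) : ∃ n, x ∈ Aset k0 r n := by
  obtain ⟨c, hc, m, hm, rfl⟩ := hx
  obtain ⟨v, hv, rfl⟩ := (mem_MsetU k0 r).1 hm
  obtain ⟨a, ha⟩ := Set.mem_iUnion.1 hc
  obtain ⟨b, hb⟩ := VU_mem k0 r hv
  exact ⟨max a b, c, kfld_mono k0 r (le_max_left a b) ha, _,
    (mem_Mset k0 r).2 ⟨v, Vn_mono k0 r (le_max_right a b) hb, rfl⟩, rfl⟩

theorem F_sub_V {n x} (hx : x ∈ Ffld k0 r n) : x ∈ Vn k0 r n :=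
  P_le_VP (Subring.subset_closure (Or.inl hx))

theorem k_sub_F {n x} (hx : x ∈ kfld k0 r n) : x ∈ Ffld k0 r n :=
  Subfield.subset_closure (Or.inl hx)

theorem Y_mem_V (n) : ambY k0 r ∈ Vn k0 r n := P_le_VP (Y_mem_cl k0 r _)

theorem M_sub_V {n x} (hx : x ∈ Mset k0 r n) : x ∈ Vn k0 r n := by
  obtain ⟨v, hv, rfl⟩ := (mem_Mset k0 r).1 hx
  exact mul_mem (Y_mem_V k0 r n) hv

theorem A_sub_V {n x} (hx : x ∈ Aset k0 r n) : x ∈ Vn k0 r n := by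
  obtain ⟨c, hc, m, hm, rfl⟩ := hx
  exact add_mem (F_sub_V k0 r (k_sub_F k0 r hc)) (M_sub_V k0 r hm)

theorem V_sub_K {n x} (hx : x ∈ Vn k0 r n) : x ∈ Kfld k0 r n := by
  obtain ⟨f, hf, h, hh, rfl⟩ := hx
  have hle : Subring.closure ((Ffld k0 r n : Set (Amb k0 r)) ∪ {ambY k0 r}) ≤
      (Kfld k0 r n).toSubring := Subring.closure_le.2 Subfield.subset_closure
  exact div_mem (hle hf) (add_mem (one_mem _) (mul_mem (hle (Y_mem_cl k0 r _)) (hle hh)))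

theorem M_add {n x y} (hx : x ∈ Mset k0 r n) (hy : y ∈ Mset k0 r n) : x + y ∈ Mset k0 r n := by
  obtain ⟨v, hv, rfl⟩ := (mem_Mset k0 r).1 hx
  obtain ⟨w, hw, rfl⟩ := (mem_Mset k0 r).1 hy
  exact (mem_Mset k0 r).2 ⟨v + w, add_mem hv hw, by ring⟩

theorem M_mul {n x y} (hx : x ∈ Mset k0 r n) (hy : y ∈ Vn k0 r n) : x * y ∈ Mset k0 r n := by
  obtain ⟨v, hv, rfl⟩ := (mem_Mset k0 r).1 hx
  exact (mem_Mset k0 r).2 ⟨v * y, mul_mem hv hy, by ring⟩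

theorem one_add_M_ne {n x} (hx : x ∈ Mset k0 r n) : 1 + x ≠ 0 := by
  obtain ⟨v, hv, rfl⟩ := (mem_Mset k0 r).1 hx
  exact VP_one_add_ne hv

theorem one_add_M_inv {n x} (hx : x ∈ Mset k0 r n) : (1 + x)⁻¹ ∈ Vn k0 r n := by
  obtain ⟨v, hv, rfl⟩ := (mem_Mset k0 r).1 hx
  exact VP_inv hv

theorem M_neg {n x} (hx : x ∈ Mset k0 r n) : -x ∈ Mset k0 r n := by
  have := M_mul k0 r hx (neg_mem (one_mem (Vn k0 r n)))
  simpa using this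

theorem one_notMem_M (n) : (1 : Amb k0 r) ∉ Mset k0 r n := fun h =>
  one_add_M_ne k0 r (M_neg k0 r h) (by simp)

theorem one_add_M_inv' {n x} (hx : x ∈ Mset k0 r n) :
    ∃ m ∈ Mset k0 r n, (1 + x)⁻¹ = 1 + m := by
  refine ⟨-(x * (1 + x)⁻¹), M_neg k0 r (M_mul k0 r hx (one_add_M_inv k0 r hx)), ?_⟩
  have := one_add_M_ne k0 r hx
  field_simp
  ring

theorem A_mul {n x y} (hx : x ∈ Aset k0 r n) (hy : y ∈ Aset k0 r n) : x * y ∈ Aset k0 r n := by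
  have hyV := A_sub_V k0 r hy
  obtain ⟨c, hc, m, hm, rfl⟩ := hx
  obtain ⟨c', hc', m', hm', rfl⟩ := hy
  refine ⟨c * c', mul_mem hc hc', m' * c + m * (c' + m'),
    M_add k0 r (M_mul k0 r hm' (F_sub_V k0 r (k_sub_F k0 r hc))) (M_mul k0 r hm hyV), by ring⟩

theorem A_inv {n x} (hx : x ∈ Aset k0 r n) (hxM : x ∉ Mset k0 r n) : x⁻¹ ∈ Aset k0 r n := by
  obtain ⟨c, hc, m, hm, rfl⟩ := hx
  have hc0 : c ≠ 0 := by rintro rfl; simp [hm] at hxM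
  have hci := inv_mem hc
  obtain ⟨m', hm', e⟩ := one_add_M_inv' k0 r (M_mul k0 r hm (F_sub_V k0 r (k_sub_F k0 r hci)))
  refine ⟨c⁻¹, hci, m' * c⁻¹, M_mul k0 r hm' (F_sub_V k0 r (k_sub_F k0 r hci)), ?_⟩
  have : c + m = c * (1 + m * c⁻¹) := by field_simp
  rw [this, mul_inv, e]; ring

theorem Dset_sub_A (n) : Dset k0 r (n + 1) ⊆ Aset k0 r (n + 1) := by
  cases n with
  | zero => simp [Dset]
  | succ n => rw [Dset]; exact Set.inter_subset_right

theorem Dset_succ (n) : Dset k0 r n ⊆ Dset k0 r (n + 1) := by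
  rcases n with _ | n
  · simp [Dset]
  · intro x hx
    rw [Dset]
    refine ⟨?_, Aset_mono k0 r (Nat.le_succ _) (Dset_sub_A k0 r n hx)⟩
    simp only [krSet, Set.mem_iInter]
    intro W hW
    have hxW : x ∈ W := hW.1 hx
    refine ⟨C x, 1, ?_, ?_, ⟨{0}, fun _ => 1, ?_, ?_⟩, ?_⟩
    · intro i; rw [coeff_C]; split_ifs; exacts [hxW, W.zero_mem]
    · intro i; rw [coeff_one]; split_ifs; exacts [W.one_mem, W.zero_mem]
    · intro i _; exact W.one_mem
    · simp
    · simp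

theorem Dset_mono {m n : ℕ} (h : m ≤ n) : Dset k0 r m ⊆ Dset k0 r n :=
  monotone_nat_of_le_succ (f := Dset k0 r) (Dset_succ k0 r) h

theorem Y_ne : ambY k0 r ≠ 0 := by
  intro e
  have := Y_transc k0 r
  rw [e] at this
  exact this isAlgebraic_zero

theorem Kfld_le_adjoin (n : ℕ) : Kfld k0 r (n + 2) ≤
    (IntermediateField.adjoin (Kfld k0 r (n + 1)) {ambX' k0 r (n + 2)}).toSubfield := by
  set G := IntermediateField.adjoin (Kfld k0 r (n + 1)) {ambX' k0 r (n + 2)} with hG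
  have hK : ∀ x ∈ Kfld k0 r (n + 1), x ∈ G := fun x hx => G.algebraMap_mem ⟨x, hx⟩
  have hY : ambY k0 r ∈ G := hK _ (Subfield.subset_closure (Or.inr rfl))
  have hF : ∀ x ∈ Ffld k0 r (n + 1), x ∈ G := fun x hx =>
    hK _ (Subfield.subset_closure (Or.inl hx))
  have hk : ∀ x ∈ kfld k0 r (n + 1), x ∈ G := fun x hx => hF _ (k_sub_F k0 r hx)
  have hT : ambX' k0 r (n + 2) ∈ G := IntermediateField.mem_adjoin_simple_self _ _
  refine Subfield.closure_le.2 (Set.union_subset ?_ (by rintro x rfl; exact hY))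
  change Ffld k0 r (n + 2) ≤ G.toSubfield
  refine Subfield.closure_le.2 (Set.union_subset ?_ ?_)
  · change kfld k0 r (n + 2) ≤ G.toSubfield
    refine Subfield.closure_le.2 ?_
    rintro x (hx | ⟨i, h1, h2, rfl⟩)
    · exact hk _ (Subfield.subset_closure (Or.inl hx))
    · rcases Nat.lt_or_ge i (n + 2) with h | h
      · exact hk _ (Subfield.subset_closure (Or.inr ⟨i, h1, by omega, rfl⟩))
      · obtain rfl : i = n + 2 := by omega
        have e : ambX k0 r (n + 2) = ambX' k0 r (n + 2) - (ambY k0 r)⁻¹ := by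
          have := Y_ne k0 r
          unfold ambX'
          field_simp
          ring
        rw [e]
        exact sub_mem hT (inv_mem hY)
  · rintro x hx
    exact hF _ (Subfield.subset_closure (Or.inr hx))

theorem exists_frac {n x} (hx : x ∈ Kfld k0 r (n + 2)) :
    ∃ f g : Polynomial (Amb k0 r), (∀ i, f.coeff i ∈ Kfld k0 r (n + 1)) ∧
      (∀ i, g.coeff i ∈ Kfld k0 r (n + 1)) ∧
      x = f.eval (ambX' k0 r (n + 2)) / g.eval (ambX' k0 r (n + 2)) := by
  obtain ⟨f, g, e⟩ := (IntermediateField.mem_adjoin_simple_iff _ _).1 (Kfld_le_adjoin k0 r n hx)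
  refine ⟨f.map (algebraMap _ _), g.map (algebraMap _ _), ?_, ?_, ?_⟩
  · intro i; rw [coeff_map]; exact (f.coeff i).2
  · intro i; rw [coeff_map]; exact (g.coeff i).2
  · rw [e, eval_map_algebraMap, eval_map_algebraMap]

theorem X'_inv_mem (n : ℕ) (hn : 1 ≤ n) : (ambX' k0 r n)⁻¹ ∈ Mset k0 r n := by
  have hX : ambX k0 r n ∈ Vn k0 r n :=
    F_sub_V k0 r (k_sub_F k0 r (Subfield.subset_closure (Or.inr ⟨n, hn, le_rfl, rfl⟩)))
  have hm : ambY k0 r * ambX k0 r n ∈ Mset k0 r n := (mem_Mset k0 r).2 ⟨_, hX, rfl⟩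
  refine (mem_Mset k0 r).2 ⟨_, one_add_M_inv k0 r hm, ?_⟩
  unfold ambX'
  rw [inv_div, div_eq_mul_inv]

theorem X'_ne (n : ℕ) (hn : 1 ≤ n) : ambX' k0 r n ≠ 0 := by
  have hX : ambX k0 r n ∈ Vn k0 r n :=
    F_sub_V k0 r (k_sub_F k0 r (Subfield.subset_closure (Or.inr ⟨n, hn, le_rfl, rfl⟩)))
  exact div_ne_zero (one_add_M_ne k0 r ((mem_Mset k0 r).2 ⟨_, hX, rfl⟩)) (Y_ne k0 r)

/-- The key lemma: if `f, g` have coefficients in the field of the valuation ring `W`, not all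
zero, and `deg f < N`, then `T^N g / (T^N g + f)` and `T^N f / (T^N g + f)` lie in the
Nagata ring `W(T)`. -/
theorem nagata_key {L : Subfield (Amb k0 r)} {W : Subring (Amb k0 r)}
    (hW : ∀ x ∈ L, x ∈ W ∨ x⁻¹ ∈ W) (T : Amb k0 r) (f g p : Polynomial (Amb k0 r))
    (hf : ∀ i, f.coeff i ∈ L) (hg : ∀ i, g.coeff i ∈ L) (hg0 : g ≠ 0) (N : ℕ)
    (hN : f.natDegree < N) (hp : p = f ∨ p = g) :
    (X ^ N * p).eval T / (X ^ N * g + f).eval T ∈ nagataSet k0 r W T := by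
  classical
  obtain ⟨c, hc, hc0, H⟩ := exists_min hW (f.coeffs ∪ g.coeffs)
    (by
      intro a ha
      rcases Finset.mem_union.1 ha with ha | ha
      · obtain ⟨i, -, rfl⟩ := mem_coeffs_iff.1 ha; exact hf i
      · obtain ⟨i, -, rfl⟩ := mem_coeffs_iff.1 ha; exact hg i)
    ⟨g.leadingCoeff, Finset.mem_union_right _ (coeff_mem_coeffs (by simpa using hg0)),
      by simpa using hg0⟩
  have Hf : ∀ i, c⁻¹ * f.coeff i ∈ W := by
    intro i
    by_cases h : f.coeff i = 0
    · simp [h, W.zero_mem]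
    · exact H _ (Finset.mem_union_left _ (coeff_mem_coeffs h))
  have Hg : ∀ i, c⁻¹ * g.coeff i ∈ W := by
    intro i
    by_cases h : g.coeff i = 0
    · simp [h, W.zero_mem]
    · exact H _ (Finset.mem_union_right _ (coeff_mem_coeffs h))
  have HXp : ∀ q : Polynomial (Amb k0 r), (∀ i, c⁻¹ * q.coeff i ∈ W) →
      ∀ i, c⁻¹ * (X ^ N * q).coeff i ∈ W := by
    intro q hq i
    rw [coeff_X_pow_mul']
    split_ifs
    · exact hq _
    · simp [W.zero_mem]
  refine ⟨C c⁻¹ * (X ^ N * p), C c⁻¹ * (X ^ N * g + f), ?_, ?_, ?_, ?_⟩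
  · intro i
    rw [coeff_C_mul]
    rcases hp with rfl | rfl
    · exact HXp _ Hf i
    · exact HXp _ Hg i
  · intro i
    rw [coeff_C_mul, coeff_add, mul_add]
    exact W.add_mem (HXp _ Hg i) (Hf i)
  · have key : ∃ i, (X ^ N * g + f).coeff i = c := by
      rcases Finset.mem_union.1 hc with h | h
      · obtain ⟨i, hi, rfl⟩ := mem_coeffs_iff.1 h
        have : i < N := (le_natDegree_of_mem_supp _ hi).trans_lt hN
        refine ⟨i, ?_⟩
        rw [coeff_add, coeff_X_pow_mul', if_neg (by omega), zero_add]
      · obtain ⟨i, hi, rfl⟩ := mem_coeffs_iff.1 h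
        refine ⟨i + N, ?_⟩
        rw [coeff_add, coeff_X_pow_mul, coeff_eq_zero_of_natDegree_lt (p := f) (by omega), add_zero]
    obtain ⟨i, hi⟩ := key
    refine ⟨{i}, fun _ => 1, fun _ _ => W.one_mem, ?_⟩
    rw [Finset.sum_singleton, coeff_C_mul, hi, inv_mul_cancel₀ hc0, one_mul]
  · rw [eval_C_mul, eval_C_mul, mul_div_mul_left _ _ (inv_ne_zero hc0)]

theorem key {n x} (hx : x ∈ Aset k0 r (n + 2)) :
    ∃ m ∈ Mset k0 r (n + 2), 1 + m ∈ Dset k0 r (n + 2) ∧ (1 + m) * x ∈ Dset k0 r (n + 2) := by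
  have hxV := A_sub_V k0 r hx
  obtain ⟨f, g, hf, hg, e⟩ := exists_frac k0 r (V_sub_K k0 r hxV)
  -- normalise so that `g(T) ≠ 0`
  obtain ⟨f, g, hf, hg, hgT, e⟩ : ∃ f g : Polynomial (Amb k0 r),
      (∀ i, f.coeff i ∈ Kfld k0 r (n + 1)) ∧ (∀ i, g.coeff i ∈ Kfld k0 r (n + 1)) ∧
      g.eval (ambX' k0 r (n + 2)) ≠ 0 ∧
      x = f.eval (ambX' k0 r (n + 2)) / g.eval (ambX' k0 r (n + 2)) := by
    by_cases h0 : g.eval (ambX' k0 r (n + 2)) = 0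
    · refine ⟨0, 1, fun i => by simp, fun i => ?_, by simp, by simp [e, h0]⟩
      rw [coeff_one]; split_ifs; exacts [one_mem _, zero_mem _]
    · exact ⟨f, g, hf, hg, h0, e⟩
  set T := ambX' k0 r (n + 2) with hT
  have hT0 : T ≠ 0 := X'_ne k0 r _ (by omega)
  have hTM : T⁻¹ ∈ Mset k0 r (n + 2) := X'_inv_mem k0 r _ (by omega)
  have hg0 : g ≠ 0 := by rintro rfl; simp at hgT
  set N := f.natDegree + 1 with hN
  have hm1 : T⁻¹ ^ N * x ∈ Mset k0 r (n + 2) := by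
    rw [hN, pow_succ', mul_assoc]
    exact M_mul k0 r hTM (mul_mem (pow_mem (M_sub_V k0 r hTM) _) hxV)
  obtain ⟨m, hm, em⟩ := one_add_M_inv' k0 r hm1
  have hne := one_add_M_ne k0 r hm1
  have hden : (X ^ N * g + f).eval T = T ^ N * g.eval T * (1 + T⁻¹ ^ N * x) := by
    rw [e, inv_pow]
    simp only [eval_add, eval_mul, eval_pow, eval_X]
    field_simp
  have e1 : 1 + m = (X ^ N * g).eval T / (X ^ N * g + f).eval T := by
    rw [← em, hden]
    simp only [eval_mul, eval_pow, eval_X]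
    field_simp
  have e2 : (1 + m) * x = (X ^ N * f).eval T / (X ^ N * g + f).eval T := by
    rw [e1, hden, e]
    simp only [eval_mul, eval_pow, eval_X]
    field_simp
  have h1A : 1 + m ∈ Aset k0 r (n + 2) := ⟨1, one_mem _, m, hm, rfl⟩
  refine ⟨m, hm, ?_, ?_⟩
  · rw [Dset]
    refine ⟨?_, h1A⟩
    simp only [krSet, Set.mem_iInter]
    intro W hW
    rw [e1]
    exact nagata_key k0 r hW.2.2 T f g g hf hg hg0 N (by omega) (Or.inr rfl)
  · rw [Dset]
    refine ⟨?_, A_mul k0 r h1A hx⟩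
    simp only [krSet, Set.mem_iInter]
    intro W hW
    rw [e2]
    exact nagata_key k0 r hW.2.2 T f g f hf hg hg0 N (by omega) (Or.inl rfl)

theorem DsetU_mem {x} (hx : x ∈ DsetU k0 r) (m : ℕ) :
    ∃ n, m ≤ n ∧ x ∈ Dset k0 r (n + 2) := by
  obtain ⟨a, ha⟩ := Set.mem_iUnion.1 hx
  exact ⟨max a m, le_max_right _ _, Dset_mono k0 r (by omega) ha⟩

theorem one_add_notMem_M {n m} (hm : m ∈ Mset k0 r n) {l} : 1 + m ∉ Mset k0 r l := by
  intro h
  have h1 := Mset_mono k0 r (le_max_left n l) hm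
  have h2 := Mset_mono k0 r (le_max_right n l) h
  apply one_notMem_M k0 r (max n l)
  have := M_add k0 r h2 (M_neg k0 r h1)
  simpa using this

theorem one_add_notMem_MM {n m} (hm : m ∈ Mset k0 r n) : 1 + m ∉ MMsetU k0 r := by
  intro h
  obtain ⟨l, hl⟩ := Set.mem_iUnion.1 h
  exact one_add_notMem_M k0 r hm hl.1

theorem MM_of {x n} (hx : x ∈ DsetU k0 r) (hM : x ∈ Mset k0 r n) : x ∈ MMsetU k0 r := by
  obtain ⟨l, hl, h⟩ := DsetU_mem k0 r hx n
  exact Set.mem_iUnion.2 ⟨l, Mset_mono k0 r (by omega) hM, h⟩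

theorem D_sub_DU {n} : Dset k0 r n ⊆ DsetU k0 r := Set.subset_iUnion (Dset k0 r) n

theorem loc_eq : locAt k0 r (DsetU k0 r) (MMsetU k0 r) = AsetU k0 r := by
  ext x
  constructor
  · rintro ⟨a, ha, b, hb, hbM, rfl⟩
    obtain ⟨i, -, hi⟩ := DsetU_mem k0 r ha 0
    obtain ⟨j, hij, hj⟩ := DsetU_mem k0 r hb i
    have haA := Dset_sub_A k0 r _ (Dset_mono k0 r (by omega : i + 2 ≤ j + 2) hi)
    have hbA := Dset_sub_A k0 r _ hj
    have hbn : b ∉ Mset k0 r (j + 2) := fun h => hbM (MM_of k0 r hb h)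
    rw [div_eq_mul_inv]
    exact Aset_sub_U k0 r _ (A_mul k0 r haA (A_inv k0 r hbA hbn))
  · intro hx
    obtain ⟨n, hn⟩ := AsetU_mem k0 r hx
    obtain ⟨m, hm, h1, h2⟩ := key k0 r (Aset_mono k0 r (by omega : n ≤ n + 2) hn)
    refine ⟨_, D_sub_DU k0 r h2, _, D_sub_DU k0 r h1, one_add_notMem_MM k0 r hm, ?_⟩
    rw [mul_div_cancel_left₀ _ (one_add_M_ne k0 r hm)]

theorem ideal_part (D' : Subring (Amb k0 r)) (hD : (D' : Set (Amb k0 r)) = DsetU k0 r)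
    (I : Ideal D') (hI : Subtype.val '' (I : Set D') = MMsetU k0 r) :
    I.IsMaximal ∧ I ≠ ⊥ ∧ ∀ Q : Ideal D', Q.IsPrime → Q < I → Q = ⊥ := by
  have memD : ∀ {x}, x ∈ D' ↔ x ∈ DsetU k0 r := fun {x} => by rw [← hD]; rfl
  have memI : ∀ {x : D'}, x ∈ I ↔ (x : Amb k0 r) ∈ MMsetU k0 r := by
    intro x
    rw [← hI]
    constructor
    · intro h; exact ⟨x, h, rfl⟩
    · rintro ⟨y, hy, e⟩; rwa [← Subtype.ext e]
  refine ⟨?_, ?_, ?_⟩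
  · rw [Ideal.isMaximal_iff]
    refine ⟨?_, ?_⟩
    · intro h
      obtain ⟨l, hl⟩ := Set.mem_iUnion.1 (memI.1 h)
      exact one_notMem_M k0 r _ hl.1
    · intro J b hIJ hbI hbJ
      obtain ⟨n, -, hn⟩ := DsetU_mem k0 r (memD.1 b.2) 0
      have hbA := Dset_sub_A k0 r _ hn
      have hbn : (b : Amb k0 r) ∉ Mset k0 r (n + 2) := fun h =>
        hbI (memI.2 (MM_of k0 r (memD.1 b.2) h))
      have hb0 : (b : Amb k0 r) ≠ 0 := by
        intro h
        apply hbn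
        rw [h]
        exact (mem_Mset k0 r).2 ⟨0, zero_mem _, by simp⟩
      obtain ⟨m, hm, h1, h2⟩ := key k0 r (A_inv k0 r hbA hbn)
      set y : D' := ⟨_, memD.2 (D_sub_DU k0 r h2)⟩ with hy
      have e : ((y * b - 1 : D') : Amb k0 r) = m := by
        push_cast
        rw [hy]
        field_simp
        ring
      have hmI : y * b - 1 ∈ I := by
        rw [memI]
        refine MM_of k0 r (memD.1 (y * b - 1).2) (n := n + 2) ?_
        rw [e]; exact hm
      have : (1 : D') = y * b - (y * b - 1) := by ring
      rw [this]
      exact J.sub_mem (J.mul_mem_left _ hbJ) (hIJ hmI)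
  · intro h
    have hYM : ambY k0 r ∈ Mset k0 r 1 := (mem_Mset k0 r).2 ⟨1, one_mem _, by simp⟩
    have hYA : ambY k0 r ∈ Dset k0 r 1 := by
      rw [Dset]; exact ⟨0, zero_mem _, _, hYM, by simp⟩
    have hYD := D_sub_DU k0 r hYA
    have : (⟨ambY k0 r, memD.2 hYD⟩ : D') ∈ I := memI.2 (MM_of k0 r hYD hYM)
    rw [h, Ideal.mem_bot] at this
    exact Y_ne k0 r (congrArg Subtype.val this)
  · intro Q hQ hQI
    by_contra hne
    obtain ⟨q, hqQ, hq0⟩ := Submodule.exists_mem_ne_zero_of_ne_bot hne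
    apply hQI.not_ge
    intro z hz
    have hq0' : (q : Amb k0 r) ≠ 0 := fun h => hq0 (Subtype.ext h)
    obtain ⟨a, ha⟩ := Set.mem_iUnion.1 (memI.1 (hQI.le hqQ))
    obtain ⟨b, hb⟩ := Set.mem_iUnion.1 (memI.1 hz)
    set n := max a b with hn
    have hqM : (q : Amb k0 r) ∈ Mset k0 r (n + 2) := Mset_mono k0 r (by omega) ha.1
    have hzM : (z : Amb k0 r) ∈ Mset k0 r (n + 2) := Mset_mono k0 r (by omega) hb.1
    obtain ⟨v, hv, hzv⟩ := (mem_Mset k0 r).1 hzM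
    obtain ⟨j, hj⟩ := VP_order (M_sub_V k0 r hqM) hq0'
    have hx : (z : Amb k0 r) ^ (j + 1) / q ∈ Mset k0 r (n + 2) := by
      have e : (z : Amb k0 r) ^ (j + 1) / q = z * (ambY k0 r ^ j / q * v ^ j) := by
        rw [pow_succ, hzv]; ring
      rw [e]
      exact M_mul k0 r hzM (mul_mem hj (pow_mem hv j))
    obtain ⟨m, hm, h1, h2⟩ := key k0 r (n := n) ⟨0, zero_mem _, _, hx, (zero_add _).symm⟩
    set d : D' := ⟨_, memD.2 (D_sub_DU k0 r h1)⟩ with hd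
    set y : D' := ⟨_, memD.2 (D_sub_DU k0 r h2)⟩ with hy
    have e : d * z ^ (j + 1) = y * q := by
      apply Subtype.ext
      push_cast
      rw [hd, hy]
      field_simp
    have hmem : d * z ^ (j + 1) ∈ Q := by rw [e]; exact Q.mul_mem_left _ hqQ
    rcases hQ.mem_or_mem hmem with h | h
    · exact absurd (memI.1 (hQI.le h)) (one_add_notMem_MM k0 r hm)
    · exact hQ.mem_of_pow_mem _ h

end concrete
end TowerAux
/-- In the tower construction, with `D := ⋃_{n ≥ 1} Dₙ` and
`𝓜 := ⋃_{n ≥ 2} 𝓜ₙ`: the localization `D_𝓜` equals `A = k + M`, and `𝓜` is a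
height-one maximal ideal of `D`. -/
theorem tower_localization_at_MM_eq_A
    (k0 : Type) [Field k0] (r : ℕ) (hr : 2 ≤ r) :
    locAt k0 r (DsetU k0 r) (MMsetU k0 r) = AsetU k0 r ∧
    ∀ D' : Subring (Amb k0 r), (D' : Set (Amb k0 r)) = DsetU k0 r →
      ∀ I : Ideal ↥D', Subtype.val '' (I : Set ↥D') = MMsetU k0 r →
        I.IsMaximal ∧ I ≠ ⊥ ∧
        ∀ Q : Ideal ↥D', Q.IsPrime → Q < I → Q = ⊥ := by
  exact ⟨TowerAux.loc_eq k0 r, fun D' hD I hI => TowerAux.ideal_part k0 r D' hD I hI⟩
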